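/- arXiv:2103.07547 — 2 statements merged into one kernel-verified Lean document; each statement's English description precedes it below -/
import Mathlib

section
/- Let q be a power of 2, let n, m be positive integers with n | m, and let σ : x ↦ x^{q^s} with gcd(s,m)=1. Let 𝒞 be a set of σ-linearized polynomials over F_{q^m}, let β ∈ F_{q^m}^*, let α_1,…,α_n be an F_q-basis of βF_{q^n}, let C = {(g(α_1),…,g(α_n)) : g ∈ 𝒞} ⊆ F_{q^m}^n, and let d be its minimum rank distance. Suppose there is a positive integer t such that: (1) n−d+1 ≤ t ≤ n−⌊(d−1)/2⌋−1; (2) t is a power of 2; (3) n = t² − 1; (4) { a x^{σ^j} + b x^{σ^{j+1}} : a, b ∈ F_{q^m} } ⊆ 𝒞 for some integer j with 0 ≤ j < n−t. Then there exists a word w ∈ F_{q^m}^n ∖ C such that |C ∩ B_{n−t}(w)| ≥ (q^n−1)/(q−1). -/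
/-- Rank weight of a vector `v ∈ K^n` over `F_q`. -/
noncomputable def rkw (Fq : Type) [Field Fq] {K : Type} [Field K] [Algebra Fq K] {n : ℕ}
    (v : Fin n → K) : ℕ :=
  Module.finrank Fq ↥(Submodule.span Fq (Set.range v))

/-- Ball of radius `t` around `w` in the rank metric. -/
def ball (Fq : Type) [Field Fq] {K : Type} [Field K] [Algebra Fq K] {n : ℕ}
    (w : Fin n → K) (t : ℕ) : Set (Fin n → K) :=
  {c : Fin n → K | rkw Fq (w - c) ≤ t}

/-- Minimum rank distance of a code `C ⊆ K^n`. -/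
noncomputable def minDist (Fq : Type) [Field Fq] {K : Type} [Field K] [Algebra Fq K] {n : ℕ}
    (C : Set (Fin n → K)) : ℕ :=
  sInf {r : ℕ | ∃ u ∈ C, ∃ v ∈ C, u ≠ v ∧ rkw Fq (u - v) = r}

section

open Polynomial

/-- For `t` a power of two and in characteristic two, `X ^ t + X + 1` divides
`X ^ (t ^ 2 - 1) - 1`, with a nonzero cofactor of the expected degree. -/
lemma trinomial_dvd {F : Type} [Field F] [CharP F 2] {t e : ℕ} (ht : t = 2 ^ e) (h1 : 1 < t) :
    ∃ h : F[X], h ≠ 0 ∧ h.natDegree = t ^ 2 - 1 - t ∧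
      (X ^ t + X + 1) * h = (X ^ (t ^ 2 - 1) - 1 : F[X]) := by
  have ht2 : 1 < t ^ 2 := by nlinarith
  have hne : (X ^ (t ^ 2 - 1) - 1 : F[X]) ≠ 0 :=
    (X_pow_sub_C_ne_zero (by omega) (1 : F))
  have hadd (a b : F[X]) : (a + b) ^ t = a ^ t + b ^ t := by
    rw [ht]; exact add_pow_char_pow a b 2 e
  have h2 : (2 : F[X]) = 0 := CharTwo.two_eq_zero
  have hmul : (X : F[X]) * (X ^ (t ^ 2 - 1) - 1)
      = (X ^ t + X + 1) * ((X ^ t + X + 1) ^ (t - 1) + 1) := by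
    have hg : (X ^ t + X + 1) * (X ^ t + X + 1) ^ (t - 1) = (X ^ (t ^ 2) + X ^ t + 1 : F[X]) := by
      rw [← pow_succ', Nat.sub_add_cancel h1.le, hadd, hadd, one_pow, ← pow_mul, ← sq]
    have hX : (X : F[X]) * X ^ (t ^ 2 - 1) = X ^ (t ^ 2) := by
      rw [← pow_succ', Nat.sub_add_cancel ht2.le]
    linear_combination hX - hg - (X ^ t + X + 1) * h2
  have hcop : IsCoprime (X ^ t + X + 1 : F[X]) X :=
    ⟨1, -(X ^ (t - 1) + 1), by
      have : (X : F[X]) ^ (t - 1) * X = X ^ t := by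
        rw [← pow_succ, Nat.sub_add_cancel h1.le]
      linear_combination -this⟩
  obtain ⟨h, hh⟩ := hcop.dvd_of_dvd_mul_left ⟨_, hmul⟩
  have hh0 : h ≠ 0 := by rintro rfl; exact hne (by simpa using hh)
  have hgd : (X ^ t + X + 1 : F[X]).natDegree = t := by
    have hX1 : (X + 1 : F[X]).natDegree = 1 := natDegree_X_add_C 1
    rw [add_assoc, natDegree_add_eq_left_of_natDegree_lt] <;> simp [hX1, h1]
  have hg0 : (X ^ t + X + 1 : F[X]) ≠ 0 := by
    intro h0; rw [h0, natDegree_zero] at hgd; omega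
  refine ⟨h, hh0, ?_, hh.symm⟩
  have hd := congrArg natDegree hh
  rw [natDegree_mul hg0 hh0, hgd] at hd
  have : (X ^ (t ^ 2 - 1) - 1 : F[X]).natDegree = t ^ 2 - 1 := natDegree_X_pow_sub_C
  omega

/-- If `b` is a cyclic vector of `T` and `g * h` annihilates `T`, then `g(T)` has rank at most
`deg h`. -/
lemma finrank_range_aeval_le {F V : Type} [Field F] [AddCommGroup V] [Module F V]
    (T : Module.End F V) (b : V) (hb : ∀ x, ∃ p : F[X], aeval T p b = x)
    {g h : F[X]} (hh : h ≠ 0) (hgh : aeval T (g * h) = 0) :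
    Module.finrank F (LinearMap.range (aeval T g)) ≤ h.natDegree := by
  let ψ : degreeLT F h.natDegree →ₗ[F] V :=
    (LinearMap.applyₗ b) ∘ₗ (aeval T).toLinearMap ∘ₗ (LinearMap.mulLeft F g) ∘ₗ
      (degreeLT F h.natDegree).subtype
  have hψ (p) : ψ p = aeval T (g * p.1) b := rfl
  have : Module.Finite F (degreeLT F h.natDegree) :=
    Module.Finite.equiv (degreeLTEquiv F h.natDegree).symm
  have hle : LinearMap.range (aeval T g) ≤ LinearMap.range ψ := by
    rintro _ ⟨x, rfl⟩
    obtain ⟨p, rfl⟩ := hb x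
    refine ⟨⟨p % h, ?_⟩, ?_⟩
    · rw [mem_degreeLT, ← degree_eq_natDegree hh]
      exact EuclideanDomain.mod_lt p hh
    · have hp : g * p = g * h * (p / h) + g * (p % h) := by
        conv_lhs => rw [← EuclideanDomain.div_add_mod p h]
        ring
      rw [hψ, ← Module.End.mul_apply, ← map_mul, hp, map_add, map_mul _ (g * h), hgh]
      simp
  calc Module.finrank F (LinearMap.range (aeval T g))
      ≤ Module.finrank F (LinearMap.range ψ) := Submodule.finrank_mono hle
    _ ≤ Module.finrank F (degreeLT F h.natDegree) := LinearMap.finrank_range_le ψ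
    _ = h.natDegree := by simp [(degreeLTEquiv F h.natDegree).finrank_eq]

/-- A generator of a cyclic Galois group has a cyclic vector. -/
lemma exists_cyclic_vector {F L : Type} [Field F] [Field L] [Algebra F L] [FiniteDimensional F L]
    [IsGalois F L] (σ : Gal(L/F)) (hσ : ∀ g : Gal(L/F), ∃ i : ℕ, σ ^ i = g) :
    ∃ b : L, ∀ x, ∃ p : F[X], aeval (σ.toLinearMap : Module.End F L) p b = x := by
  refine ⟨IsGalois.normalBasis F L 1, fun x => ?_⟩
  choose i hi using hσ
  refine ⟨∑ g, C ((IsGalois.normalBasis F L).repr x g) * X ^ i g, ?_⟩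
  conv_rhs => rw [← (IsGalois.normalBasis F L).sum_repr x]
  simp only [map_sum, LinearMap.sum_apply]
  refine Finset.sum_congr rfl fun g _ => ?_
  rw [IsGalois.normalBasis_apply g]
  have hg : (σ ^ i g) (IsGalois.normalBasis F L 1) = g (IsGalois.normalBasis F L 1) := by rw [hi]
  rw [← hg]
  simp [Module.End.mul_apply, Module.algebraMap_end_apply, Module.End.coe_pow, AlgEquiv.coe_pow]

end

section

variable {Fq K : Type} [Field Fq] [Fintype Fq] [Field K] [Algebra Fq K]

lemma pow_card_pow_injective {q : ℕ} (hq : Fintype.card Fq = q) (k : ℕ) {x y : K}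
    (h : x ^ q ^ k = y ^ q ^ k) : x = y := by
  subst hq
  have h' (z : K) : (FiniteField.frobeniusAlgHom Fq K ^ k) z = z ^ Fintype.card Fq ^ k := by
    simp [AlgHom.coe_pow, FiniteField.coe_frobeniusAlgHom, pow_iterate]
  rw [← h', ← h'] at h
  exact (FiniteField.frobeniusAlgHom Fq K ^ k).toRingHom.injective h

lemma exists_algebraMap_eq_of_pow_eq [Finite K] {q s : ℕ} (hq : Fintype.card Fq = q)
    (hs : s.Coprime (Module.finrank Fq K)) {y : K} (hy : y ^ q ^ s = y) :
    ∃ a : Fq, algebraMap Fq K a = y := by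
  have : FiniteDimensional Fq K := inferInstance
  subst hq
  let φ := FiniteField.frobeniusAlgEquivOfAlgebraic Fq K
  have hφ (k : ℕ) (z : K) : (φ ^ k) z = z ^ Fintype.card Fq ^ k := by
    rw [AlgEquiv.coe_pow, FiniteField.coe_frobeniusAlgEquivOfAlgebraic_iterate]
  obtain ⟨k, hk⟩ := exists_pow_eq_self_of_coprime (x := φ)
    (n := s) (by rwa [FiniteField.orderOf_frobeniusAlgEquivOfAlgebraic])
  have h1 : φ y = y := by
    rw [← hk, AlgEquiv.coe_pow]
    exact Function.iterate_fixed (by rw [hφ, hy]) k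
  have h2 : y ∈ (⊥ : IntermediateField Fq K) := by
    rw [IsGalois.mem_bot_iff_fixed]
    intro g
    obtain ⟨i, rfl⟩ := (FiniteField.bijective_frobeniusAlgEquivOfAlgebraic_pow Fq K).2 g
    change (φ ^ i.1) y = y
    rw [AlgEquiv.coe_pow]
    exact Function.iterate_fixed h1 _
  exact IntermediateField.mem_bot.1 h2

/-- The linearized trinomial `v ^ σ ^ t + v ^ σ + v` has rank at most `t ^ 2 - 1 - t` on an
intermediate field of degree `t ^ 2 - 1`. -/
lemma exists_submodule_trinomial [Finite K] [CharP Fq 2] {q s t e : ℕ} (hq : Fintype.card Fq = q)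
    (ht : t = 2 ^ e) (h1 : 1 < t) (E : IntermediateField Fq K)
    (hE : Module.finrank Fq E = t ^ 2 - 1) (hs : s.Coprime (t ^ 2 - 1)) :
    ∃ M : Submodule Fq K, Module.finrank Fq M ≤ t ^ 2 - 1 - t ∧
      ∀ v ∈ E, v ^ (q ^ s) ^ t + v ^ q ^ s + v ∈ M := by
  have : FiniteDimensional Fq K := inferInstance
  subst hq
  let φ := FiniteField.frobeniusAlgEquivOfAlgebraic Fq E
  have hφ (k : ℕ) (z : E) : (φ ^ k) z = z ^ Fintype.card Fq ^ k := by
    rw [AlgEquiv.coe_pow, FiniteField.coe_frobeniusAlgEquivOfAlgebraic_iterate]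
  have hord : orderOf φ = t ^ 2 - 1 := by
    rw [FiniteField.orderOf_frobeniusAlgEquivOfAlgebraic, hE]
  obtain ⟨k, hk⟩ := exists_pow_eq_self_of_coprime (x := φ) (n := s) (by rwa [hord])
  obtain ⟨b, hb⟩ := exists_cyclic_vector (φ ^ s) fun g => by
    obtain ⟨i, rfl⟩ := (FiniteField.bijective_frobeniusAlgEquivOfAlgebraic_pow Fq E).2 g
    exact ⟨k * i.1, by rw [pow_mul, hk]⟩
  obtain ⟨h, hh0, hhd, hh⟩ := trinomial_dvd (F := Fq) ht h1
  have hpow (i : ℕ) (z : E) : ((φ ^ s).toLinearMap ^ i : Module.End Fq E) z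
      = z ^ (Fintype.card Fq ^ s) ^ i := by
    rw [Module.End.coe_pow, ← pow_mul, ← hφ, pow_mul, AlgEquiv.coe_pow (φ ^ s)]
    rfl
  have hann : Polynomial.aeval ((φ ^ s).toLinearMap : Module.End Fq E)
      ((Polynomial.X ^ t + Polynomial.X + 1) * h) = 0 := by
    rw [hh]
    ext z
    have hz : z ^ (Fintype.card Fq ^ s) ^ (t ^ 2 - 1) = z := by
      rw [← pow_mul, mul_comm, pow_mul, ← hord, ← pow_mul, ← hφ, pow_mul, pow_orderOf_eq_one]
      simp
    simp only [map_sub, map_pow, Polynomial.aeval_X, map_one, LinearMap.sub_apply, hpow, hz]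
    simp
  have hfin := finrank_range_aeval_le _ b hb hh0 hann
  refine ⟨Submodule.map E.val.toLinearMap (LinearMap.range (Polynomial.aeval
    ((φ ^ s).toLinearMap : Module.End Fq E) (Polynomial.X ^ t + Polynomial.X + 1))),
    (Submodule.finrank_map_le _ _).trans (hfin.trans hhd.le), fun v hv => ?_⟩
  refine ⟨_, ⟨⟨v, hv⟩, rfl⟩, ?_⟩
  have hp1 := hpow 1 ⟨v, hv⟩
  rw [pow_one, pow_one] at hp1
  simp only [map_add, map_pow, Polynomial.aeval_X, map_one, LinearMap.add_apply, hpow, hp1]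
  simp

end

/-- with `q` a power of `2`, `t` a power of `2`, `n = t²−1`, and
`{a x^{σ^j} + b x^{σ^{j+1}} : a,b} ⊆ 𝒞` for some `j < n−t`, where
`n−d+1 ≤ t ≤ n−⌊(d−1)/2⌋−1`, there is a word `w ∉ C` with
`|C ∩ B_{n−t}(w)| ≥ (q^n−1)/(q−1)`. -/
theorem stmt_15 (q s n m t j : ℕ) (Fq K : Type) [Field Fq] [Fintype Fq] [Field K]
    [Fintype K] [Algebra Fq K]
    (hq2 : ∃ e : ℕ, 0 < e ∧ q = 2 ^ e)
    (hcard : Fintype.card Fq = q) (hfin : Module.finrank Fq K = m)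
    (hn : 0 < n) (hnm : n ∣ m) (hs : Nat.gcd s m = 1)
    (𝒞 : Set (K → K))
    (hlin : ∀ f ∈ 𝒞, ∃ N : ℕ, ∃ a : Fin N → K, ∀ x : K,
      f x = ∑ i : Fin N, a i * x ^ ((q ^ s) ^ (i : ℕ)))
    (β : K) (hβ : β ≠ 0)
    (α : Fin n → K) (hα : LinearIndependent Fq α)
    (hspan : (Submodule.span Fq (Set.range α) : Set K)
      = (fun y : K => β * y) '' {x : K | x ^ q ^ n = x})
    (C : Set (Fin n → K)) (hC : C = (fun g : K → K => fun i : Fin n => g (α i)) '' 𝒞)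
    (d : ℕ) (hd : d = minDist Fq C)
    (ht0 : 0 < t)
    (ht1 : (n : ℤ) - d + 1 ≤ (t : ℤ))
    (ht2 : (t : ℤ) ≤ (n : ℤ) - (((d - 1) / 2 : ℕ) : ℤ) - 1)
    (htw : ∃ w : ℕ, t = 2 ^ w)
    (hnt : n = t ^ 2 - 1)
    (hj : (j : ℤ) < (n : ℤ) - (t : ℤ))
    (hGab : {f : K → K | ∃ a b : K, ∀ x : K,
        f x = a * x ^ ((q ^ s) ^ j) + b * x ^ ((q ^ s) ^ (j + 1))} ⊆ 𝒞) :
    ∃ w : Fin n → K, w ∉ C ∧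
      (q ^ n - 1) / (q - 1) ≤ Nat.card ↥(C ∩ ball Fq w (n - t)) := by
  obtain ⟨e, he0, he⟩ := hq2
  obtain ⟨w, hw⟩ := htw
  have hFin : FiniteDimensional Fq K := inferInstance
  have ht : 1 < t := by
    by_contra h
    obtain rfl : t = 1 := by omega
    simp at hnt
    omega
  have hn3 : 3 ≤ n := by
    have : 2 ^ 2 ≤ t ^ 2 := Nat.pow_le_pow_left ht 2
    omega
  have hchar : CharP Fq 2 := by
    obtain ⟨p, hp⟩ := CharP.exists Fq
    have hpp : p.Prime := (CharP.char_is_prime_or_zero Fq p).resolve_right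
      (CharP.char_ne_zero_of_finite Fq p)
    have hp0 : ((q : ℕ) : Fq) = 0 := by rw [← hcard]; exact FiniteField.cast_card_eq_zero Fq
    have hdvd : p ∣ 2 ^ e := he ▸ (CharP.cast_eq_zero_iff Fq p q).1 hp0
    rwa [(Nat.prime_dvd_prime_iff_eq hpp Nat.prime_two).1 (hpp.dvd_of_dvd_pow hdvd)] at hp
  have hcharK : CharP K 2 := charP_of_injective_algebraMap (algebraMap Fq K).injective 2
  have hFr (k : ℕ) (z : K) : (FiniteField.frobeniusAlgHom Fq K ^ k) z = z ^ q ^ k := by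
    simp [AlgHom.coe_pow, FiniteField.coe_frobeniusAlgHom, pow_iterate, hcard]
  -- the subfield `F_{q^n}`
  let E : IntermediateField Fq K :=
    { AlgHom.equalizer (FiniteField.frobeniusAlgHom Fq K ^ n) (AlgHom.id Fq K) with
      inv_mem' := fun x hx => by
        have hx' : (FiniteField.frobeniusAlgHom Fq K ^ n) x = x := hx
        change (FiniteField.frobeniusAlgHom Fq K ^ n) x⁻¹ = x⁻¹
        rw [map_inv₀, hx'] }
  have hEmem (x : K) : x ∈ E ↔ x ^ q ^ n = x := by
    rw [← hFr]; rfl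
  have hspan_mem (x : K) : x ∈ Submodule.span Fq (Set.range α) ↔ ∃ z ∈ E, β * z = x := by
    rw [← SetLike.mem_coe, hspan]
    simp [hEmem]
  have hEfin : Module.finrank Fq E = n := by
    have hmap : Submodule.map (LinearMap.mulLeft Fq β) (Subalgebra.toSubmodule E.toSubalgebra)
        = Submodule.span Fq (Set.range α) := by
      ext x
      rw [hspan_mem]
      simp
    have h1 := (Submodule.equivMapOfInjective
      (LinearMap.mulLeft Fq β) (mul_right_injective₀ hβ)
      (Subalgebra.toSubmodule E.toSubalgebra)).finrank_eq
    rw [hmap, finrank_span_eq_card hα, Fintype.card_fin] at h1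
    exact h1
  have hsn : s.Coprime n := Nat.Coprime.coprime_dvd_right hnm hs
  have hcardE : Nat.card Eˣ = q ^ n - 1 := by
    rw [Nat.card_units, Module.natCard_eq_pow_finrank (K := Fq), hEfin, Nat.card_eq_fintype_card,
      hcard]
  obtain ⟨M, hM, hMmem⟩ := exists_submodule_trinomial hcard hw ht E (by rw [hEfin, hnt])
    (hnt ▸ hsn)
  rw [← hnt] at hM
  have hinj (k : ℕ) {x y : K} (h : x ^ (q ^ s) ^ k = y ^ (q ^ s) ^ k) : x = y := by
    rw [← pow_mul] at h
    exact pow_card_pow_injective hcard _ h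
  have hvanish (a b c : K) (h : ∀ i, a * α i ^ (q ^ s) ^ (j + t) + b * α i ^ (q ^ s) ^ j
      + c * α i ^ (q ^ s) ^ (j + 1) = 0) (z : K) (hz : z ∈ E) :
      a * (β * z) ^ (q ^ s) ^ (j + t) + b * (β * z) ^ (q ^ s) ^ j
        + c * (β * z) ^ (q ^ s) ^ (j + 1) = 0 := by
    let Q (k : ℕ) : K →ₗ[Fq] K := (FiniteField.frobeniusAlgHom Fq K ^ (s * k)).toLinearMap
    have hQ (k : ℕ) (x : K) : Q k x = x ^ (q ^ s) ^ k := by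
      rw [← pow_mul, ← hFr]; rfl
    let P : K →ₗ[Fq] K := LinearMap.mulLeft Fq a ∘ₗ Q (j + t) + LinearMap.mulLeft Fq b ∘ₗ Q j
      + LinearMap.mulLeft Fq c ∘ₗ Q (j + 1)
    have hP (x : K) : P x = a * x ^ (q ^ s) ^ (j + t) + b * x ^ (q ^ s) ^ j
        + c * x ^ (q ^ s) ^ (j + 1) := by simp [P, hQ]
    have hle : Submodule.span Fq (Set.range α) ≤ LinearMap.ker P := by
      rw [Submodule.span_le]
      rintro _ ⟨i, rfl⟩
      exact (hP _).trans (h i)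
    rw [← hP]
    exact hle ((hspan_mem _).2 ⟨z, hz, rfl⟩)
  let A (μ : K) : K := μ ^ (q ^ s) ^ (j + t) * μ⁻¹ ^ (q ^ s) ^ j
  let B (μ : K) : K := μ ^ (q ^ s) ^ (j + t) * μ⁻¹ ^ (q ^ s) ^ (j + 1)
  let cw (u : Eˣ) (i : Fin n) : K := A (β * (u : E)) * α i ^ (q ^ s) ^ j
    + B (β * (u : E)) * α i ^ (q ^ s) ^ (j + 1)
  let word (i : Fin n) : K := α i ^ (q ^ s) ^ (j + t)
  have hu0 (u : Eˣ) : ((u : E) : K) ≠ 0 := by simp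
  have hμ0 (u : Eˣ) : β * ((u : E) : K) ≠ 0 := mul_ne_zero hβ (hu0 u)
  have hcwC (u : Eˣ) : cw u ∈ C := by
    rw [hC]
    exact ⟨fun x => A (β * (u : E)) * x ^ (q ^ s) ^ j + B (β * (u : E)) * x ^ (q ^ s) ^ (j + 1),
      hGab ⟨_, _, fun _ => rfl⟩, rfl⟩
  have hrk (u : Eˣ) : rkw Fq (word - cw u) ≤ n - t := by
    set μ : K := β * ((u : E) : K) with hμ
    have hle : Submodule.span Fq (Set.range (word - cw u)) ≤
        M.map (LinearMap.mulLeft Fq (μ ^ (q ^ s) ^ (j + t))) := by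
      rw [Submodule.span_le]
      rintro _ ⟨i, rfl⟩
      obtain ⟨z, hz, hzi⟩ := (hspan_mem (α i)).1 (Submodule.subset_span ⟨i, rfl⟩)
      have hv : α i * μ⁻¹ ∈ E := by
        have : α i * μ⁻¹ = z * ((u : E) : K)⁻¹ := by
          rw [← hzi, hμ]; field_simp
        rw [this]
        exact E.mul_mem hz (E.inv_mem (u : E).2)
      refine ⟨_, hMmem _ (pow_mem hv ((q ^ s) ^ j)), ?_⟩
      have h1 : μ ^ (q ^ s) ^ (j + t) * μ⁻¹ ^ (q ^ s) ^ (j + t) = 1 := by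
        rw [← mul_pow, mul_inv_cancel₀ (hμ0 u), one_pow]
      have h2 : (2 : K) = 0 := CharTwo.two_eq_zero
      simp only [LinearMap.mulLeft_apply, Pi.sub_apply, word, cw, A, B, ← hμ]
      rw [← pow_mul (α i * μ⁻¹), ← pow_mul (α i * μ⁻¹), ← pow_add, ← pow_succ, mul_pow, mul_pow,
        mul_pow]
      linear_combination (α i ^ (q ^ s) ^ (j + t)) * h1 + (μ ^ (q ^ s) ^ (j + t)
        * μ⁻¹ ^ (q ^ s) ^ j * α i ^ (q ^ s) ^ j + μ ^ (q ^ s) ^ (j + t)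
        * μ⁻¹ ^ (q ^ s) ^ (j + 1) * α i ^ (q ^ s) ^ (j + 1)) * h2
    calc rkw Fq (word - cw u)
        ≤ Module.finrank Fq (M.map (LinearMap.mulLeft Fq (μ ^ (q ^ s) ^ (j + t)))) :=
          Submodule.finrank_mono hle
      _ ≤ Module.finrank Fq M := Submodule.finrank_map_le _ M
      _ ≤ n - t := hM
  have hne (u : Eˣ) : word ≠ cw u := by
    intro h
    have h0 := hvanish 1 (-A (β * (u : E))) (-B (β * (u : E))) (fun i => by
      have := congrFun h i
      simp only [word, cw] at this
      linear_combination this) (u : E) (u : E).2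
    have hcancel (k : ℕ) : (β * ((u : E) : K))⁻¹ ^ k * (β * ((u : E) : K)) ^ k = 1 := by
      rw [← mul_pow, inv_mul_cancel₀ (hμ0 u), one_pow]
    have h2 : (2 : K) = 0 := CharTwo.two_eq_zero
    refine pow_ne_zero ((q ^ s) ^ (j + t)) (hμ0 u) ?_
    simp only [A, B] at h0
    linear_combination -h0 - (β * ((u : E) : K)) ^ (q ^ s) ^ (j + t) *
      (hcancel ((q ^ s) ^ j) + hcancel ((q ^ s) ^ (j + 1)))
  have hfix : ∃ z ∈ E, z ^ q ^ s ≠ z := by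
    by_contra! hcon
    have hbot : E = ⊥ := by
      refine le_bot_iff.1 fun z hz => IntermediateField.mem_bot.2 ?_
      exact exists_algebraMap_eq_of_pow_eq hcard (hfin ▸ hs) (hcon z hz)
    rw [hbot, IntermediateField.finrank_bot] at hEfin
    omega
  have hfiber (u v : Eˣ) (h : cw u = cw v) : ∃ a : Fqˣ, u = Units.map (algebraMap Fq E) a * v := by
    obtain ⟨z, hz, hzs⟩ := hfix
    have h0 := hvanish 0 (A (β * (u : E)) - A (β * (v : E))) (B (β * (u : E)) - B (β * (v : E)))
      (fun i => by
        have := congrFun h i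
        simp only [cw] at this
        linear_combination this)
    have h1 := h0 1 E.one_mem
    have h2 := h0 z hz
    simp only [mul_one, mul_pow, zero_mul, zero_add] at h1 h2
    have hz1 : z ^ (q ^ s) ^ (j + 1) - z ^ (q ^ s) ^ j ≠ 0 := by
      rw [sub_ne_zero, pow_succ', pow_mul]
      exact fun h => hzs (hinj j h)
    have hB : B (β * (u : E)) - B (β * (v : E)) = 0 := by
      have : (B (β * (u : E)) - B (β * (v : E))) * (β ^ (q ^ s) ^ (j + 1)
          * (z ^ (q ^ s) ^ (j + 1) - z ^ (q ^ s) ^ j)) = 0 := by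
        linear_combination h2 - z ^ (q ^ s) ^ j * h1
      exact (mul_eq_zero.1 this).resolve_right (mul_ne_zero (pow_ne_zero _ hβ) hz1)
    have hA : A (β * (u : E)) - A (β * (v : E)) = 0 := by
      rw [hB, zero_mul, add_zero] at h1
      exact (mul_eq_zero.1 h1).resolve_right (pow_ne_zero _ hβ)
    set x : K := β * ((u : E) : K) with hx
    set y : K := β * ((v : E) : K) with hy
    have hx0 : x ≠ 0 := hμ0 u
    have hy0 : y ≠ 0 := hμ0 v
    have hA' : (x / y) ^ (q ^ s) ^ (j + t) = (x / y) ^ (q ^ s) ^ j := by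
      simp only [A, sub_eq_zero, inv_pow] at hA
      rw [div_pow, div_pow]
      field_simp at hA ⊢
      exact hA
    have hB' : (x / y) ^ (q ^ s) ^ (j + t) = (x / y) ^ (q ^ s) ^ (j + 1) := by
      simp only [B, sub_eq_zero, inv_pow] at hB
      rw [div_pow, div_pow]
      field_simp at hB ⊢
      exact hB
    have hr : (x / y) ^ q ^ s = x / y := by
      refine hinj j ?_
      rw [← pow_mul, ← pow_succ', ← hB', hA']
    obtain ⟨a, ha⟩ := exists_algebraMap_eq_of_pow_eq hcard (hfin ▸ hs) hr
    have ha0 : a ≠ 0 := by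
      rintro rfl
      rw [map_zero] at ha
      exact div_ne_zero hx0 hy0 ha.symm
    refine ⟨Units.mk0 a ha0, Units.ext (Subtype.ext ?_)⟩
    change ((u : E) : K) = algebraMap Fq K a * ((v : E) : K)
    rw [ha, hx, hy]
    have := hu0 v
    field_simp
  refine ⟨word, fun hword => ?_, ?_⟩
  · have hle : d ≤ n - t := by
      have hmin : minDist Fq C ≤ rkw Fq (word - cw 1) :=
        Nat.sInf_le ⟨word, hword, cw 1, hcwC 1, hne 1, rfl⟩
      exact hd ▸ hmin.trans (hrk 1)
    have htn : t ≤ n := by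
      have : t * 2 ≤ t ^ 2 := by nlinarith
      omega
    omega
  · classical
    have hfinE : Fintype Eˣ := Fintype.ofFinite _
    have hcount : (Finset.univ : Finset Eˣ).card ≤ (q - 1) * (Finset.univ.image cw).card := by
      refine Finset.card_le_mul_card_image _ _ fun c hc => ?_
      obtain ⟨v, -, rfl⟩ := Finset.mem_image.1 hc
      calc
        _ ≤ (Finset.univ.image fun a : Fqˣ =>
            Units.map (algebraMap Fq E : Fq →* E) a * v).card := by
            refine Finset.card_le_card fun u hu => ?_
            obtain ⟨a, ha⟩ := hfiber u v (Finset.mem_filter.1 hu).2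
            exact Finset.mem_image.2 ⟨a, Finset.mem_univ _, ha.symm⟩
        _ ≤ (Finset.univ : Finset Fqˣ).card := Finset.card_image_le
        _ = q - 1 := by rw [Finset.card_univ, Fintype.card_units, hcard]
    rw [Finset.card_univ, ← Nat.card_eq_fintype_card, hcardE] at hcount
    refine (Nat.div_le_of_le_mul hcount).trans ?_
    rw [Nat.card_coe_set_eq, ← Set.ncard_coe_finset]
    refine Set.ncard_le_ncard (fun c hc => ?_) (Set.toFinite _)
    obtain ⟨u, -, rfl⟩ := Finset.mem_image.1 (Finset.mem_coe.1 hc)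
    exact ⟨hcwC u, hrk u⟩
end

section
/- Let p be a prime, q a power of p, and k ≥ 2, t positive integers. Let q' = p^r for a non-negative integer r, set p_i = 1 + q' + … + q'^i for i ≥ 0, let n = t·p_k, and let m be a multiple of n. Let σ : x ↦ x^{q^s} with gcd(s,m)=1. Let 𝒞 be a set of σ-linearized polynomials over F_{q^m}, let β ∈ F_{q^m}^*, let α_1,…,α_n be an F_q-basis of βF_{q^n}, let C = {(g(α_1),…,g(α_n)) : g ∈ 𝒞} ⊆ F_{q^m}^n, and let d be its minimum rank distance. Suppose: (1) ⌊(d−1)/2⌋ + 1 ≤ t·q'^k ≤ d−1; (2) (𝒢_{n, t·p_{k−2}+1, σ})^{σ^j} = { Σ_{i=j}^{j + t·p_{k−2}} a_i x^{σ^i} : a_i ∈ F_{q^m} } ⊆ 𝒞 for some integer j with 0 ≤ j < t·q'^k. Then there exists a word w ∈ F_{q^m}^n ∖ C such that |C ∩ B_{t·q'^k}(w)| ≥ (q^n−1)/(q^t−1). (Note t·q'^k = n − t·p_{k−1}.) -/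
open Polynomial in
theorem card_filter_pow_eq_self_le {K : Type*} [Field K] [Fintype K] [DecidableEq K] {N : ℕ}
    (hN : 1 < N) : (Finset.univ.filter fun x : K => x ^ N = x).card ≤ N := by
  calc (Finset.univ.filter fun x : K => x ^ N = x).card
      ≤ (X ^ N - X : K[X]).roots.toFinset.card := by
        refine Finset.card_le_card fun x hx => ?_
        simpa [FiniteField.X_pow_card_sub_X_ne_zero K hN, sub_eq_zero] using hx
    _ ≤ (X ^ N - X : K[X]).roots.card := Multiset.toFinset_card_le _
    _ ≤ (X ^ N - X : K[X]).natDegree := card_roots' _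
    _ = N := FiniteField.X_pow_card_sub_X_natDegree_eq K hN

theorem mem_range_algebraMap_of_pow_card_eq {F K : Type*} [Field F] [Fintype F] [Field K]
    [Finite K] [Algebra F K] {x : K} (hx : x ^ Fintype.card F = x) :
    x ∈ Set.range (algebraMap F K) := by
  classical
  have := Fintype.ofFinite K
  have h : Finset.univ.image (algebraMap F K) =
      Finset.univ.filter fun x : K => x ^ Fintype.card F = x := by
    refine Finset.eq_of_subset_of_card_le (fun y hy => ?_) ?_
    · obtain ⟨z, -, rfl⟩ := Finset.mem_image.1 hy
      simp [← map_pow, FiniteField.pow_card]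
    · rw [Finset.card_image_of_injective _ (algebraMap F K).injective, Finset.card_univ]
      exact card_filter_pow_eq_self_le Fintype.one_lt_card
  have hx' : x ∈ Finset.univ.image (algebraMap F K) := by simpa [h] using hx
  simpa using hx'

theorem pow_pow_gcd_eq_self {K : Type*} [Monoid K] {q a b : ℕ} {x : K} (ha : x ^ q ^ a = x)
    (hb : x ^ q ^ b = x) : x ^ q ^ Nat.gcd a b = x := by
  have key (c : ℕ) : Function.IsPeriodicPt (fun y : K => y ^ q) c x ↔ x ^ q ^ c = x := by
    simp [Function.IsPeriodicPt, Function.IsFixedPt, pow_iterate]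
  exact (key _).1 (((key a).2 ha).gcd ((key b).2 hb))

/-- A `σ`-polynomial with `D` coefficients vanishing on a space of dimension at least `D` over the
fixed field of `σ` is zero. -/
theorem sigma_coeff_eq_zero {F K : Type*} [Field F] [Field K] [Algebra F K]
    [FiniteDimensional F K] (σ : K →ₐ[F] K) (hσ : ∀ x, σ x = x → x ∈ Set.range (algebraMap F K))
    (D : ℕ) : ∀ (a : ℕ → K) (V : Submodule F K), D ≤ Module.finrank F V →
      (∀ x ∈ V, ∑ i ∈ Finset.range D, a i * (σ ^ i) x = 0) → ∀ i < D, a i = 0 := by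
  induction D with
  | zero => intro a V _ _ i hi; omega
  | succ D ih =>
    intro a V hV hz
    obtain ⟨y, hyV, hy⟩ : ∃ y ∈ V, y ≠ 0 := by
      apply Submodule.exists_mem_ne_zero_of_ne_bot
      rintro rfl
      simp at hV
    set b : ℕ → K := fun i => a i * (σ ^ i) y with hb
    set B : ℕ → K := fun i => ∑ l ∈ Finset.range (i + 1), b l with hB
    have hBD : B D = 0 := hz y hyV
    let L : K →ₗ[F] K := (σ.toLinearMap - LinearMap.id) ∘ₗ LinearMap.mulLeft F y⁻¹
    have hL (x : K) : L x = σ (y⁻¹ * x) - y⁻¹ * x := by simp [L]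
    have hker : Module.finrank F (LinearMap.ker L) ≤ 1 := by
      refine (Submodule.finrank_mono (t := F ∙ y) fun x hx => ?_).trans
        (finrank_span_singleton hy).le
      rw [LinearMap.mem_ker, hL, sub_eq_zero] at hx
      obtain ⟨c, hc⟩ := hσ _ hx
      refine Submodule.mem_span_singleton.2 ⟨c, ?_⟩
      rw [Algebra.smul_def, hc]
      field_simp
    have hrank : D ≤ Module.finrank F (V.map L) := by
      have h1 := LinearMap.finrank_range_add_finrank_ker (L.domRestrict V)
      have h2 : Module.finrank F (LinearMap.ker (L.domRestrict V)) ≤ 1 := by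
        refine le_trans ?_ hker
        rw [LinearMap.ker_domRestrict, ← Submodule.finrank_map_subtype_eq]
        exact Submodule.finrank_mono (Submodule.map_comap_le _ _)
      rw [LinearMap.range_domRestrict] at h1
      omega
    have hsum (z : K) : ∀ d, ∑ i ∈ Finset.range (d + 1), b i * (σ ^ i) z =
        B d * (σ ^ d) z - ∑ i ∈ Finset.range d, B i * (σ ^ i) (σ z - z) := by
      intro d
      induction d with
      | zero => simp [hB]
      | succ d ihd =>
        have h3 : B (d + 1) = B d + b (d + 1) := Finset.sum_range_succ _ _
        rw [Finset.sum_range_succ, ihd, Finset.sum_range_succ _ d, h3, map_sub,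
          ← AlgHom.mul_apply, ← pow_succ]
        ring
    have hBz := ih B (V.map L) hrank (by
      rintro _ ⟨x, hx, rfl⟩
      have h4 := hsum (y⁻¹ * x) D
      rw [hBD, zero_mul, zero_sub, ← hL] at h4
      rw [← neg_eq_zero, ← h4, ← hz x hx]
      refine Finset.sum_congr rfl fun i _ => ?_
      rw [hb]
      simp only
      rw [mul_assoc, ← map_mul, mul_inv_cancel_left₀ hy])
    have hB' : ∀ i ≤ D, B i = 0 := fun i hi =>
      hi.lt_or_eq.elim (hBz i) fun h => h ▸ hBD
    intro i hi
    have hbi : b i = 0 := by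
      cases i with
      | zero => simpa [hB] using hB' 0 (by omega)
      | succ i =>
        have h3 : B (i + 1) = B i + b (i + 1) := Finset.sum_range_succ _ _
        rw [hB' _ (by omega), hB' _ (by omega), zero_add] at h3
        exact h3.symm
    exact (mul_eq_zero.1 hbi).resolve_right ((map_ne_zero (σ ^ i)).2 hy)

open Polynomial in
theorem finrank_ker_aeval_le_natDegree {F K : Type*} [Field F] [Field K] [Algebra F K]
    [FiniteDimensional F K] (σ : K →ₐ[F] K) (hσ : ∀ x, σ x = x → x ∈ Set.range (algebraMap F K))
    {G : F[X]} (hG : G ≠ 0) :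
    Module.finrank F (LinearMap.ker (aeval σ.toLinearMap G)) ≤ G.natDegree := by
  by_contra! h
  have := sigma_coeff_eq_zero σ hσ (G.natDegree + 1) (fun i => algebraMap F K (G.coeff i)) _ h
    (fun x hx => by
      rw [LinearMap.mem_ker, aeval_eq_sum_range, LinearMap.sum_apply] at hx
      rw [← hx]
      refine Finset.sum_congr rfl fun i _ => ?_
      rw [LinearMap.smul_apply, Algebra.smul_def, Module.End.coe_pow, AlgHom.coe_pow]
      rfl) G.natDegree (by omega)
  exact hG (by simpa using this)

open Polynomial in
/-- Writing `p_l = 1 + Q + ⋯ + Q ^ (l - 1)`, in characteristic `p` the polynomial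
`∑_{l ≤ k} X ^ p_l` divides `X ^ p_{k + 1} - 1`. -/
theorem exists_sum_X_pow_mul_eq {F : Type*} [Field F] (p r k t : ℕ) [ExpChar F p]
    (ht : 0 < t) :
    ∃ G : F[X], G ≠ 0 ∧ G.natDegree ≤ t * (p ^ r) ^ k ∧
      G * (∑ l ∈ Finset.range (k + 1), X ^ (t * ∑ i ∈ Finset.range l, (p ^ r) ^ i)) =
        X ^ (t * ∑ i ∈ Finset.range (k + 1), (p ^ r) ^ i) - 1 := by
  obtain ⟨Q, hQ⟩ : ∃ Q, p ^ r = Q + 1 :=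
    ⟨p ^ r - 1, (Nat.sub_add_cancel (Nat.pow_pos (expChar_pos F p))).symm⟩
  set f : F[X] := ∑ l ∈ Finset.range (k + 1), X ^ (t * ∑ i ∈ Finset.range l, (p ^ r) ^ i) with hf
  have hfdeg : f.natDegree ≤ t * ∑ i ∈ Finset.range k, (p ^ r) ^ i := by
    refine natDegree_sum_le_of_forall_le _ _ fun l hl => ?_
    rw [natDegree_X_pow]
    gcongr
    exact Nat.lt_succ_iff.1 (Finset.mem_range.1 hl)
  have hrec : X ^ t * f ^ p ^ r =
      f + X ^ (t * ∑ i ∈ Finset.range (k + 1), (p ^ r) ^ i) - 1 := by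
    have h1 := Finset.sum_range_succ
      (fun l => (X : F[X]) ^ (t * ∑ i ∈ Finset.range l, (p ^ r) ^ i)) (k + 1)
    rw [Finset.sum_range_succ'] at h1
    rw [← hf] at h1
    simp only [Finset.range_zero, Finset.sum_empty, mul_zero, pow_zero] at h1
    rw [← h1, add_sub_cancel_right, hf, sum_pow_char_pow, Finset.mul_sum]
    refine Finset.sum_congr rfl fun l _ => ?_
    rw [geom_sum_succ, ← pow_mul, ← pow_add]
    congr 1
    ring
  have hmul : (X ^ t * f ^ Q - 1) * f =
      X ^ (t * ∑ i ∈ Finset.range (k + 1), (p ^ r) ^ i) - 1 := by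
    rw [hQ] at hrec ⊢
    rw [pow_succ] at hrec
    rw [← hQ] at hrec ⊢
    linear_combination hrec
  refine ⟨X ^ t * f ^ Q - 1, ?_, ?_, hmul⟩
  · rintro h0
    rw [h0, zero_mul] at hmul
    refine X_pow_sub_C_ne_zero (R := F) (n := t * ∑ i ∈ Finset.range (k + 1), (p ^ r) ^ i) ?_ 1
      (by simpa using hmul.symm)
    refine Nat.mul_pos ht ?_
    rw [Finset.sum_range_succ']
    simp
  · have hgeom : (∑ i ∈ Finset.range k, (p ^ r) ^ i) * Q + 1 = (p ^ r) ^ k := by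
      have := geom_sum_mul_add Q k
      rw [hQ]
      exact this
    calc (X ^ t * f ^ Q - 1 : F[X]).natDegree
        ≤ max (X ^ t * f ^ Q : F[X]).natDegree (1 : F[X]).natDegree := natDegree_sub_le _ _
      _ ≤ (X ^ t : F[X]).natDegree + (f ^ Q).natDegree := by
          simpa using natDegree_mul_le (p := (X ^ t : F[X])) (q := f ^ Q)
      _ ≤ t + Q * (t * ∑ i ∈ Finset.range k, (p ^ r) ^ i) := by
          rw [natDegree_X_pow]
          gcongr
          exact natDegree_pow_le.trans (by gcongr)
      _ = t * (p ^ r) ^ k := by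
          rw [← hgeom]
          ring

/-- The function underlying the codewords: for a set `S` of exponents with top exponent `N`,
the `σ`-polynomial `∑_{i ∈ S} σ ^ i (u x)` divided by its leading coefficient. -/
noncomputable def twist {F K : Type*} [Field F] [Field K] [Algebra F K] (σ : K →ₐ[F] K)
    (S : Finset ℕ) (N : ℕ) (u x : K) : K :=
  ((σ ^ N) u)⁻¹ * ∑ i ∈ S, (σ ^ i) (u * x)

theorem twist_eq_sum_range {F K : Type*} [Field F] [Field K] [Algebra F K] (σ : K →ₐ[F] K)
    {S : Finset ℕ} {n : ℕ} (hS : S ⊆ Finset.range n) (N : ℕ) (u x : K) :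
    twist σ S N u x = ∑ i ∈ Finset.range n,
      (if i ∈ S then ((σ ^ N) u)⁻¹ * (σ ^ i) u else 0) * (σ ^ i) x := by
  rw [twist, Finset.mul_sum, ← Finset.sum_subset hS]
  · refine Finset.sum_congr rfl fun i hi => ?_
    rw [if_pos hi, map_mul, mul_assoc]
  · intro i _ hi
    rw [if_neg hi, zero_mul]

theorem sigma_coeff_eq_zero_of_linearIndependent {F K : Type*} [Field F] [Field K] [Algebra F K]
    [FiniteDimensional F K] (σ : K →ₐ[F] K) (hσ : ∀ x, σ x = x → x ∈ Set.range (algebraMap F K))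
    {n : ℕ} {y : Fin n → K} (hy : LinearIndependent F y) {a : ℕ → K}
    (h : ∀ l, ∑ i ∈ Finset.range n, a i * (σ ^ i) (y l) = 0) : ∀ i < n, a i = 0 := by
  refine sigma_coeff_eq_zero σ hσ n a (Submodule.span F (Set.range y))
    (by rw [finrank_span_eq_card hy, Fintype.card_fin]) fun x hx => ?_
  induction hx using Submodule.span_induction with
  | mem x hx => obtain ⟨l, rfl⟩ := hx; exact h l
  | zero => simp
  | add x z _ _ hx hz => simp_rw [map_add, mul_add, Finset.sum_add_distrib, hx, hz, add_zero]
  | smul c x _ hx =>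
    simp_rw [map_smul, mul_smul_comm]
    rw [← Finset.smul_sum, hx, smul_zero]

theorem twist_ne_zero {F K : Type*} [Field F] [Field K] [Algebra F K]
    [FiniteDimensional F K] (σ : K →ₐ[F] K) (hσ : ∀ x, σ x = x → x ∈ Set.range (algebraMap F K))
    {n : ℕ} {y : Fin n → K} (hy : LinearIndependent F y) {S : Finset ℕ}
    (hS : S ⊆ Finset.range n) (h0 : 0 ∈ S) (N : ℕ) {u : K} (hu : u ≠ 0) :
    ∃ l, twist σ S N u (y l) ≠ 0 := by
  by_contra! h
  simp_rw [twist_eq_sum_range σ hS] at h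
  have := sigma_coeff_eq_zero_of_linearIndependent σ hσ hy h 0 (Finset.mem_range.1 (hS h0))
  rw [if_pos h0] at this
  exact mul_ne_zero (inv_ne_zero ((map_ne_zero (σ ^ N)).2 hu)) ((map_ne_zero (σ ^ 0)).2 hu) this

theorem sigma_pow_div_eq_of_twist_eq {F K : Type*} [Field F] [Field K] [Algebra F K]
    [FiniteDimensional F K] (σ : K →ₐ[F] K) (hσ : ∀ x, σ x = x → x ∈ Set.range (algebraMap F K))
    {n : ℕ} {y : Fin n → K} (hy : LinearIndependent F y) {S : Finset ℕ}
    (hS : S ⊆ Finset.range n) {t : ℕ} (h0 : 0 ∈ S) (ht : t ∈ S) (N : ℕ) {u v : K} (hu : u ≠ 0)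
    (hv : v ≠ 0) (h : ∀ l, twist σ S N u (y l) = twist σ S N v (y l)) :
    (σ ^ t) (u / v) = u / v := by
  simp_rw [twist_eq_sum_range σ hS] at h
  have key (i : ℕ) (hi : i ∈ S) : ((σ ^ N) u)⁻¹ * (σ ^ i) u = ((σ ^ N) v)⁻¹ * (σ ^ i) v := by
    have := sigma_coeff_eq_zero_of_linearIndependent σ hσ hy
      (a := fun i => (if i ∈ S then ((σ ^ N) u)⁻¹ * (σ ^ i) u else 0) -
        (if i ∈ S then ((σ ^ N) v)⁻¹ * (σ ^ i) v else 0))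
      (fun l => by simp_rw [sub_mul, Finset.sum_sub_distrib]; exact sub_eq_zero.2 (h l))
      i (Finset.mem_range.1 (hS hi))
    simpa only [if_pos hi, sub_eq_zero] using this
  have hU : (σ ^ N) u ≠ 0 := (map_ne_zero (σ ^ N)).2 hu
  have hV : (σ ^ N) v ≠ 0 := (map_ne_zero (σ ^ N)).2 hv
  have hT : (σ ^ t) v ≠ 0 := (map_ne_zero (σ ^ t)).2 hv
  have e0 := key 0 h0
  have et := key t ht
  rw [pow_zero, AlgHom.one_apply, AlgHom.one_apply, inv_mul_eq_div, inv_mul_eq_div,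
    div_eq_div_iff hU hV] at e0
  rw [inv_mul_eq_div, inv_mul_eq_div, div_eq_div_iff hU hV] at et
  rw [map_div₀, div_eq_div_iff hT hv]
  refine mul_right_cancel₀ hU ?_
  refine mul_right_cancel₀ hV ?_
  linear_combination (v * (σ ^ N) u) * et - ((σ ^ t) v * (σ ^ N) u) * e0

open Polynomial in
theorem rkw_twist_le {F K : Type} [Field F] [Field K] [Algebra F K]
    [FiniteDimensional F K] (σ : K →ₐ[F] K) (hσ : ∀ x, σ x = x → x ∈ Set.range (algebraMap F K))
    {n : ℕ} {S : Finset ℕ} {G : F[X]} (hG : G ≠ 0)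
    (hGS : G * ∑ i ∈ S, X ^ i = X ^ n - 1) {u : K} {y : Fin n → K}
    (huy : ∀ l, (σ ^ n) (u * y l) = u * y l) (N j : ℕ) :
    rkw F (fun l => (σ ^ j) (twist σ S N u (y l))) ≤ G.natDegree := by
  refine le_trans ?_ (finrank_ker_aeval_le_natDegree σ hσ hG)
  let M : K →ₗ[F] K := (σ ^ j).toLinearMap ∘ₗ LinearMap.mulLeft F ((σ ^ N) u)⁻¹
  refine le_trans (Submodule.finrank_mono (t := (LinearMap.ker (aeval σ.toLinearMap G)).map M) ?_)
    (Submodule.finrank_map_le _ _)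
  rw [Submodule.span_le]
  rintro _ ⟨l, rfl⟩
  have hpow (i : ℕ) (x : K) : (σ.toLinearMap ^ i) x = (σ ^ i) x := by
    rw [Module.End.coe_pow, AlgHom.coe_pow]
    rfl
  refine ⟨∑ i ∈ S, (σ ^ i) (u * y l), ?_, rfl⟩
  have hz := huy l
  generalize u * y l = z at hz
  have h := congrArg (fun P => aeval σ.toLinearMap P z) hGS
  simp only [map_mul, map_sum, map_pow, aeval_X, map_sub, map_one, Module.End.mul_apply,
    LinearMap.sum_apply, LinearMap.sub_apply, Module.End.one_apply, hpow] at h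
  rw [hz, sub_self] at h
  simpa using h

theorem card_div_le_card_image_of_fibers {K V : Type*} [Field K] [Fintype K] [DecidableEq K]
    [DecidableEq V] {s : Finset K} (hs : ∀ u ∈ s, u ≠ 0) {N : ℕ} (hN : 1 < N) (g : K → V)
    (hg : ∀ u ∈ s, ∀ v ∈ s, g u = g v → (u / v) ^ N = u / v) :
    s.card / (N - 1) ≤ (s.image g).card := by
  refine Nat.div_le_of_le_mul (Finset.card_le_mul_card_image s (N - 1) fun b hb => ?_)
  obtain ⟨v, hv, rfl⟩ := Finset.mem_image.1 hb
  have h1 : ((Finset.univ.filter fun x : K => x ^ N = x).erase 0).card ≤ N - 1 := by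
    rw [Finset.card_erase_of_mem (by simp [show N ≠ 0 by omega])]
    exact Nat.sub_le_sub_right (card_filter_pow_eq_self_le hN) 1
  refine le_trans ?_ h1
  refine Finset.card_le_card_of_injOn (fun u => u / v) (fun u hu => ?_) fun u _ u' _ h => ?_
  · obtain ⟨hus, huv⟩ := Finset.mem_filter.1 hu
    simp [hs u hus, hs v hv, hg u hus v hv huv]
  · exact (div_left_inj' (hs v hv)).1 h

/-- with `q' = p^r`, `p_i = 1 + q' + ⋯ + q'^i`, `n = t·p_k` (`k ≥ 2`), if
`(𝒢_{n,t·p_{k−2}+1,σ})^{σ^j} ⊆ 𝒞` for some `j < t·q'^k`, and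
`⌊(d−1)/2⌋+1 ≤ t·q'^k ≤ d−1`, then there is a word `w ∉ C` with
`|C ∩ B_{t·q'^k}(w)| ≥ (q^n−1)/(q^t−1)`. -/
theorem stmt_16 (p q qp r s n m t k j : ℕ) (Fq K : Type) [Field Fq] [Fintype Fq] [Field K]
    [Fintype K] [Algebra Fq K]
    (hp : p.Prime) (hpe : ∃ e : ℕ, 0 < e ∧ q = p ^ e) (hqp : qp = p ^ r)
    (ht0 : 0 < t) (hk2 : 2 ≤ k)
    (hnval : n = t * ∑ jj ∈ Finset.range (k + 1), qp ^ jj)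
    (hcard : Fintype.card Fq = q) (hfin : Module.finrank Fq K = m)
    (hn : 0 < n) (hnm : n ∣ m) (hs : Nat.gcd s m = 1)
    (𝒞 : Set (K → K))
    (hlin : ∀ f ∈ 𝒞, ∃ N : ℕ, ∃ a : Fin N → K, ∀ x : K,
      f x = ∑ i : Fin N, a i * x ^ ((q ^ s) ^ (i : ℕ)))
    (β : K) (hβ : β ≠ 0)
    (α : Fin n → K) (hα : LinearIndependent Fq α)
    (hspan : (Submodule.span Fq (Set.range α) : Set K)
      = (fun y : K => β * y) '' {x : K | x ^ q ^ n = x})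
    (C : Set (Fin n → K)) (hC : C = (fun g : K → K => fun i : Fin n => g (α i)) '' 𝒞)
    (d : ℕ) (hd : d = minDist Fq C)
    (hb1 : (d - 1) / 2 + 1 ≤ t * qp ^ k)
    (hb2 : ((t * qp ^ k : ℕ) : ℤ) ≤ (d : ℤ) - 1)
    (hj : j < t * qp ^ k)
    (hGab : {f : K → K |
        ∃ a : Fin (t * (∑ jj ∈ Finset.range (k - 1), qp ^ jj) + 1) → K, ∀ x : K,
          f x = ∑ i, a i * x ^ ((q ^ s) ^ (j + (i : ℕ)))} ⊆ 𝒞) :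
    ∃ w : Fin n → K, w ∉ C ∧
      (q ^ n - 1) / (q ^ t - 1) ≤ Nat.card ↥(C ∩ ball Fq w (t * qp ^ k)) := by
  classical
  obtain ⟨e, he, hqe⟩ := hpe
  have : Fact p.Prime := ⟨hp⟩
  have : CharP Fq p := charP_of_card_eq_prime_pow (hcard.trans hqe)
  have hq1 : 1 < q := hcard ▸ Fintype.one_lt_card
  have hqp0 : 0 < qp := hqp ▸ Nat.pow_pos hp.pos
  -- the Galois generator `σ`
  let σ : K →ₐ[Fq] K := FiniteField.frobeniusAlgHom Fq K ^ s
  have hσpow (i : ℕ) (x : K) : (σ ^ i) x = x ^ ((q ^ s) ^ i) := by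
    rw [← pow_mul, AlgHom.coe_pow, FiniteField.coe_frobeniusAlgHom, hcard, pow_iterate, ← pow_mul]
  have hKm (x : K) : x ^ q ^ m = x := by
    rw [← hfin, ← hcard, ← Module.card_eq_pow_finrank, FiniteField.pow_card]
  have hσ (x : K) (hx : σ x = x) : x ∈ Set.range (algebraMap Fq K) := by
    have h1 : x ^ q ^ s = x := by simpa [hx, eq_comm] using hσpow 1 x
    have h2 := pow_pow_gcd_eq_self h1 (hKm x)
    rw [hs, pow_one, ← hcard] at h2
    exact mem_range_algebraMap_of_pow_card_eq h2
  have hσn {x : K} (hx : x ^ q ^ n = x) : (σ ^ n) x = x := by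
    rw [hσpow, ← pow_mul, mul_comm, pow_mul]
    have h := Function.IsFixedPt.iterate (f := fun y : K => y ^ q ^ n) hx s
    rwa [pow_iterate] at h
  -- reduction to the subfield with `q ^ n` elements
  let y : Fin n → K := fun l => β⁻¹ * α l
  have hyL (l : Fin n) : y l ^ q ^ n = y l := by
    obtain ⟨x, hx, hxl⟩ : α l ∈ (fun y : K => β * y) '' {x : K | x ^ q ^ n = x} :=
      hspan ▸ Submodule.subset_span (Set.mem_range_self l)
    simp only [Set.mem_ofPred_eq] at hx hxl
    simpa [y, ← hxl, inv_mul_cancel_left₀ hβ] using hx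
  have hαy (l : Fin n) : α l = β * y l := (mul_inv_cancel_left₀ hβ _).symm
  have hylin : LinearIndependent Fq y :=
    hα.map' (LinearMap.mulLeft Fq β⁻¹)
      (LinearMap.ker_eq_bot.2 (mul_right_injective₀ (inv_ne_zero hβ)))
  have hcardL : (Finset.univ.filter fun x : K => x ^ q ^ n = x).card = q ^ n := by
    have h1 : Nat.card (Submodule.span Fq (Set.range α)) = q ^ n := by
      rw [Module.natCard_eq_pow_finrank (K := Fq), finrank_span_eq_card hα, Fintype.card_fin,
        Nat.card_eq_fintype_card, hcard]
    have h2 : Nat.card {x : K | x ^ q ^ n = x} = q ^ n := by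
      rw [← Nat.card_image_of_injective (mul_right_injective₀ hβ), ← hspan]
      exact h1
    rw [← Set.ncard_coe_finset, Finset.coe_filter_univ]
    exact h2
  -- the exponents
  let P : ℕ → ℕ := fun l => t * ∑ i ∈ Finset.range l, qp ^ i
  have hPmono : StrictMono P := strictMono_nat_of_lt_succ fun l => by
    simp only [P, Finset.sum_range_succ]
    have := Nat.pow_pos (n := l) hqp0
    gcongr
    omega
  have hPn : P (k + 1) = n := hnval.symm
  have hP0 : P 0 = 0 := by simp [P]
  have hP1 : P 1 = t := by simp [P]
  have hS' : (Finset.range k).image P ⊆ Finset.range (P (k - 1) + 1) := by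
    intro i hi
    obtain ⟨l, hl, rfl⟩ := Finset.mem_image.1 hi
    rw [Finset.mem_range] at hl ⊢
    exact Nat.lt_succ_of_le (hPmono.monotone (by omega))
  set S : Finset ℕ := (Finset.range (k + 1)).image P with hSdef
  have hS : S ⊆ Finset.range n := by
    intro i hi
    obtain ⟨l, hl, rfl⟩ := Finset.mem_image.1 hi
    rw [Finset.mem_range] at hl ⊢
    exact hPn ▸ hPmono hl
  have h0S : 0 ∈ S := Finset.mem_image.2 ⟨0, by simp, hP0⟩
  have htS : t ∈ S := Finset.mem_image.2 ⟨1, by simp; omega, hP1⟩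
  obtain ⟨G, hG0, hGdeg, hGS⟩ := exists_sum_X_pow_mul_eq (F := Fq) p r k t ht0
  rw [← hqp] at hGdeg hGS
  have hGS' : G * ∑ i ∈ S, Polynomial.X ^ i = Polynomial.X ^ n - 1 := by
    rw [hSdef, Finset.sum_image hPmono.injective.injOn, hnval]
    exact hGS
  -- the received word and the nearby codewords
  let w : Fin n → K := fun l => (σ ^ j) ((σ ^ P k) (y l))
  let c : K → Fin n → K := fun u l => (σ ^ j) ((σ ^ P k) (y l) - twist σ S (P k) u (y l))
  have hwc (u : K) : w - c u = fun l => (σ ^ j) (twist σ S (P k) u (y l)) := by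
    ext l
    simp [w, c]
  have hcC {u : K} (hu : u ≠ 0) : c u ∈ C := by
    let a : ℕ → K := fun i => if i ∈ (Finset.range k).image P then
      -(σ ^ j) (((σ ^ P k) u)⁻¹) * (σ ^ (j + i)) (u * β⁻¹) else 0
    rw [hC]
    refine ⟨fun x => ∑ i : Fin (P (k - 1) + 1), a i * x ^ ((q ^ s) ^ (j + (i : ℕ))),
      hGab ⟨fun i => a i, fun x => rfl⟩, ?_⟩
    ext l
    have hU : (σ ^ P k) u ≠ 0 := (map_ne_zero (σ ^ P k)).2 hu
    have htw : (σ ^ P k) (y l) - twist σ S (P k) u (y l) =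
        -((σ ^ P k) u)⁻¹ * ∑ i ∈ (Finset.range k).image P, (σ ^ i) (u * y l) := by
      rw [twist, hSdef, Finset.range_add_one, Finset.image_insert, Finset.sum_insert, mul_add,
        map_mul (σ ^ P k) u, inv_mul_cancel_left₀ hU]
      · ring
      · simp only [Finset.mem_image, Finset.mem_range, not_exists, not_and]
        exact fun l hl => (hPmono hl).ne
    simp only [c, htw]
    rw [Fin.sum_univ_eq_sum_range (fun i => a i * α l ^ ((q ^ s) ^ (j + i))),
      ← Finset.sum_subset hS', map_mul, map_sum, Finset.mul_sum]
    · refine Finset.sum_congr rfl fun i hi => ?_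
      rw [← hσpow]
      simp only [a, if_pos hi]
      rw [mul_assoc, ← map_mul, hαy, ← AlgHom.mul_apply, ← pow_add, map_neg, mul_assoc,
        inv_mul_cancel_left₀ hβ]
    · intro i _ hi
      simp only [a, if_neg hi, zero_mul]
  have hcball {u : K} (hu : u ^ q ^ n = u) : c u ∈ ball Fq w (t * qp ^ k) := by
    rw [ball, Set.mem_ofPred_eq, hwc]
    refine (rkw_twist_le σ hσ hG0 hGS' (fun l => hσn ?_) _ _).trans hGdeg
    rw [mul_pow, hu, hyL]
  refine ⟨w, fun hwC => ?_, ?_⟩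
  · obtain ⟨l, hl⟩ := twist_ne_zero σ hσ hylin hS h0S (P k) one_ne_zero
    have hne : w ≠ c 1 := by
      intro h
      rw [← sub_eq_zero, hwc] at h
      exact hl ((map_eq_zero (σ ^ j)).1 (congrFun h l))
    have h1 : d ≤ rkw Fq (w - c 1) :=
      hd ▸ Nat.sInf_le ⟨w, hwC, c 1, hcC one_ne_zero, hne, rfl⟩
    have h2 : rkw Fq (w - c 1) ≤ t * qp ^ k := hcball (one_pow _)
    omega
  · let s₀ : Finset K := (Finset.univ.filter fun x : K => x ^ q ^ n = x).erase 0
    have hs₀ : s₀.card = q ^ n - 1 := by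
      rw [Finset.card_erase_of_mem (by simp; omega), hcardL]
    have hmem {u : K} (hu : u ∈ s₀) : u ≠ 0 ∧ u ^ q ^ n = u := by simpa [s₀] using hu
    have htn : t ∣ n := hnval ▸ dvd_mul_right _ _
    have hgcd : Nat.gcd (s * t) n = t := by
      rw [Nat.Coprime.gcd_mul_left_cancel t (Nat.Coprime.coprime_dvd_right hnm hs),
        Nat.gcd_eq_left htn]
    have h1 := card_div_le_card_image_of_fibers (s := s₀) (fun u hu => (hmem hu).1)
      (Nat.one_lt_pow ht0.ne' hq1) c (fun u hu v hv huv => by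
        have h2 := sigma_pow_div_eq_of_twist_eq σ hσ hylin hS h0S htS (P k) (hmem hu).1
          (hmem hv).1 fun l => (σ ^ j).toRingHom.injective
            (congrFun ((hwc u).symm.trans ((congrArg (w - ·) huv).trans (hwc v))) l)
        rw [hσpow, ← pow_mul] at h2
        rw [← hgcd]
        exact pow_pow_gcd_eq_self h2 (by rw [div_pow, (hmem hu).2, (hmem hv).2]))
    rw [hs₀] at h1
    refine h1.trans ?_
    rw [Nat.card_coe_set_eq, ← Set.ncard_coe_finset]
    refine Set.ncard_le_ncard ?_ (Set.toFinite _)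
    intro x hx
    obtain ⟨u, hu, rfl⟩ := Finset.mem_image.1 hx
    exact ⟨hcC (hmem hu).1, hcball (hmem hu).2⟩
end
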